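/- Let X₁,…,X_{N₁} and Y₁,…,Y_{N₂} be points in [0,1]^d. For K ≥ 1, subdivide [0,1]^d dyadically K times into 2^{Kd} congruent subcubes Q_{p₁…p_K} of edge length 2^{−K}, where for 1 ≤ k ≤ K, Q_{p₁…p_k} denotes the cube of edge length 2^{−k} at level k of the dyadic subdivision. Let n_{1,p₁…p_k} and n_{2,p₁…p_k} denote the numbers of X-points and Y-points in Q_{p₁…p_k}, and let L_{p₁…p_K} be the length of an optimal partial bipartite matching of the X-points and Y-points in Q_{p₁…p_K}. Then L_MBM(X₁,…,X_{N₁}; Y₁,…,Y_{N₂}) ≤ Σ_{p₁…p_K} L_{p₁…p_K} + Σ_{k=1}^{K} (√d / 2^k) Σ_{p₁…p_k} |n_{1,p₁…p_k} − n_{2,p₁…p_k}|. -/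

import Mathlib

open MeasureTheory ProbabilityTheory Filter

noncomputable section

/-- The unit cube `[0,1]^d` in Euclidean space `ℝ^d`. -/
def unitCube (d : ℕ) : Set (EuclideanSpace ℝ (Fin d)) :=
  {x | ∀ i, x i ∈ Set.Icc (0 : ℝ) 1}

/-- The uniform probability measure on the unit cube `[0,1]^d`
(the cube has Lebesgue measure one, so the restriction of Lebesgue measure
to the cube is the uniform probability measure on it). -/
def unifCube (d : ℕ) : Measure (EuclideanSpace ℝ (Fin d)) :=
  volume.restrict (unitCube d)

/-- `LMBMon X Y A B` is the minimum total Euclidean length of a partial bipartite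
matching pairing `min A.card B.card` of the points `X j, j ∈ A` with as many of the
points `Y j, j ∈ B`, each pair consisting of one `X`-point and one `Y`-point. -/
def LMBMon {d N₁ N₂ : ℕ} (X : Fin N₁ → EuclideanSpace ℝ (Fin d))
    (Y : Fin N₂ → EuclideanSpace ℝ (Fin d)) (A : Finset (Fin N₁)) (B : Finset (Fin N₂)) : ℝ :=
  sInf { s | ∃ (σ : Fin (min A.card B.card) ↪ Fin N₁) (τ : Fin (min A.card B.card) ↪ Fin N₂),
    (∀ i, σ i ∈ A) ∧ (∀ i, τ i ∈ B) ∧ s = ∑ i, dist (X (σ i)) (Y (τ i)) }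

/-- `LMBM X Y` : the minimum total Euclidean length of a bipartite matching between the
points of `X` and the points of `Y`; if the two families have different cardinalities
`N₁ ≠ N₂`, it is the minimum length of a partial matching pairing `min N₁ N₂` points of
each family, leaving `|N₁ - N₂|` points unmatched. -/
def LMBM {d N₁ N₂ : ℕ} (X : Fin N₁ → EuclideanSpace ℝ (Fin d))
    (Y : Fin N₂ → EuclideanSpace ℝ (Fin d)) : ℝ :=
  LMBMon X Y Finset.univ Finset.univ

/-- `MP d lam`: the expected length of a minimum bipartite matching in the Poissonized
model on `[0,1]^d` with intensity `lam`: the numbers `n₁, n₂` of points of the two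
families are independent Poisson(lam) variables and the points are i.i.d. uniform
on the cube. -/
def MP (d : ℕ) (lam : ℝ) : ℝ :=
  ∑' n₁ : ℕ, ∑' n₂ : ℕ,
    (Real.exp (-lam) * lam ^ n₁ / n₁.factorial) *
      ((Real.exp (-lam) * lam ^ n₂ / n₂.factorial) *
        ∫ p : (Fin n₁ → EuclideanSpace ℝ (Fin d)) × (Fin n₂ → EuclideanSpace ℝ (Fin d)),
          LMBM p.1 p.2 ∂ ((Measure.pi fun _ => unifCube d).prod (Measure.pi fun _ => unifCube d)))

end
/-- The label of the dyadic cube of edge length `2⁻ᵏ` of the `k`-th dyadic subdivision of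
`[0,1]^d` containing the point `x`: in each coordinate `i`, the cube occupies the interval
`[q i / 2^k, (q i + 1) / 2^k)` (closed at the right end when `q i = 2^k - 1`). -/
noncomputable def dyadicLabel (d k : ℕ) (x : EuclideanSpace ℝ (Fin d)) (i : Fin d) : ℕ :=
  min ⌊(2 : ℝ) ^ k * x i⌋₊ (2 ^ k - 1)

structure PMatch {N₁ N₂ : ℕ} (A : Finset (Fin N₁)) (B : Finset (Fin N₂))
    (P : Finset (Fin N₁ × Fin N₂)) : Prop where
  memA : ∀ p ∈ P, p.1 ∈ A
  memB : ∀ p ∈ P, p.2 ∈ B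
  inj1 : ∀ p ∈ P, ∀ r ∈ P, p.1 = r.1 → p = r
  inj2 : ∀ p ∈ P, ∀ r ∈ P, p.2 = r.2 → p = r

theorem LMBMon_le_of_PMatch {d N₁ N₂ : ℕ} (X : Fin N₁ → EuclideanSpace ℝ (Fin d))
    (Y : Fin N₂ → EuclideanSpace ℝ (Fin d)) (A : Finset (Fin N₁)) (B : Finset (Fin N₂))
    (P : Finset (Fin N₁ × Fin N₂)) (hP : PMatch A B P) (hc : P.card = min A.card B.card) :
    LMBMon X Y A B ≤ ∑ p ∈ P, dist (X p.1) (Y p.2) := by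
  unfold LMBMon
  apply csInf_le
  · refine ⟨0, ?_⟩
    rintro s ⟨σ, τ, -, -, rfl⟩
    positivity
  · let e := (P.equivFinOfCardEq hc).symm
    refine ⟨⟨fun i => (e i).1.1, fun i j h => ?_⟩, ⟨fun i => (e i).1.2, fun i j h => ?_⟩, ?_, ?_, ?_⟩
    · exact e.injective (Subtype.ext (hP.inj1 _ (e i).2 _ (e j).2 h))
    · exact e.injective (Subtype.ext (hP.inj2 _ (e i).2 _ (e j).2 h))
    · intro i; exact hP.memA _ (e i).2
    · intro i; exact hP.memB _ (e i).2
    · rw [← Finset.sum_coe_sort P (fun p => dist (X p.1) (Y p.2))]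
      exact (Equiv.sum_comp e (fun p : P => dist (X p.1.1) (Y p.1.2))).symm

theorem exists_PMatch {d N₁ N₂ : ℕ} (X : Fin N₁ → EuclideanSpace ℝ (Fin d))
    (Y : Fin N₂ → EuclideanSpace ℝ (Fin d)) (A : Finset (Fin N₁)) (B : Finset (Fin N₂)) :
    ∃ P : Finset (Fin N₁ × Fin N₂), PMatch A B P ∧ P.card = min A.card B.card ∧
      ∑ p ∈ P, dist (X p.1) (Y p.2) = LMBMon X Y A B := by
  have hmem : LMBMon X Y A B ∈ { s | ∃ (σ : Fin (min A.card B.card) ↪ Fin N₁)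
      (τ : Fin (min A.card B.card) ↪ Fin N₂),
      (∀ i, σ i ∈ A) ∧ (∀ i, τ i ∈ B) ∧ s = ∑ i, dist (X (σ i)) (Y (τ i)) } := by
    unfold LMBMon
    apply Set.Nonempty.csInf_mem
    · let eA := A.equivFin.symm
      let eB := B.equivFin.symm
      refine ⟨_, ⟨fun i => (eA (Fin.castLE (min_le_left _ _) i)).1, fun i j h => ?_⟩,
        ⟨fun i => (eB (Fin.castLE (min_le_right _ _) i)).1, fun i j h => ?_⟩, ?_, ?_, rfl⟩
      · exact Fin.castLE_injective _ (eA.injective (Subtype.ext h))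
      · exact Fin.castLE_injective _ (eB.injective (Subtype.ext h))
      · intro i; exact (eA _).2
      · intro i; exact (eB _).2
    · apply Set.Finite.subset (Set.finite_range
        (fun p : (Fin (min A.card B.card) ↪ Fin N₁) × (Fin (min A.card B.card) ↪ Fin N₂) =>
          ∑ i, dist (X (p.1 i)) (Y (p.2 i))))
      rintro s ⟨σ, τ, -, -, rfl⟩
      exact ⟨(σ, τ), rfl⟩
  obtain ⟨σ, τ, hσ, hτ, hs⟩ := hmem
  have hinj : Function.Injective (fun i => (σ i, τ i)) := fun i j h =>
    σ.injective (congrArg Prod.fst h)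
  refine ⟨Finset.univ.map ⟨fun i => (σ i, τ i), hinj⟩, ⟨?_, ?_, ?_, ?_⟩, by simp, by simp [hs]⟩
  · simp only [Finset.mem_map, Finset.mem_univ, true_and, Function.Embedding.coeFn_mk]
    rintro _ ⟨i, rfl⟩; exact hσ i
  · simp only [Finset.mem_map, Finset.mem_univ, true_and, Function.Embedding.coeFn_mk]
    rintro _ ⟨i, rfl⟩; exact hτ i
  · simp only [Finset.mem_map, Finset.mem_univ, true_and, Function.Embedding.coeFn_mk]
    rintro _ ⟨i, rfl⟩ _ ⟨j, rfl⟩ h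
    rw [σ.injective h]
  · simp only [Finset.mem_map, Finset.mem_univ, true_and, Function.Embedding.coeFn_mk]
    rintro _ ⟨i, rfl⟩ _ ⟨j, rfl⟩ h
    rw [τ.injective h]

theorem LMBMon_empty {d N₁ N₂ : ℕ} (X : Fin N₁ → EuclideanSpace ℝ (Fin d))
    (Y : Fin N₂ → EuclideanSpace ℝ (Fin d)) : LMBMon X Y ∅ ∅ = 0 := by
  obtain ⟨P, -, hc, hs⟩ := exists_PMatch X Y ∅ ∅
  have : P = ∅ := by simpa using hc
  rw [← hs, this]; simp

theorem LMBMon_le_extend {d N₁ N₂ : ℕ} (X : Fin N₁ → EuclideanSpace ℝ (Fin d))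
    (Y : Fin N₂ → EuclideanSpace ℝ (Fin d)) (A : Finset (Fin N₁)) (B : Finset (Fin N₂))
    (D : ℝ) (hD : ∀ a ∈ A, ∀ b ∈ B, dist (X a) (Y b) ≤ D)
    (P : Finset (Fin N₁ × Fin N₂)) (hP : PMatch A B P) :
    LMBMon X Y A B ≤ ∑ p ∈ P, dist (X p.1) (Y p.2) +
      ((min A.card B.card : ℕ) - (P.card : ℝ)) * D := by
  classical
  have c1 : (P.image Prod.fst).card = P.card :=
    Finset.card_image_of_injOn (fun p hp r hr h => hP.inj1 p hp r hr h)
  have c2 : (P.image Prod.snd).card = P.card :=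
    Finset.card_image_of_injOn (fun p hp r hr h => hP.inj2 p hp r hr h)
  have s1 : P.image Prod.fst ⊆ A := by
    intro a ha
    obtain ⟨p, hp, rfl⟩ := Finset.mem_image.1 ha
    exact hP.memA p hp
  have s2 : P.image Prod.snd ⊆ B := by
    intro a ha
    obtain ⟨p, hp, rfl⟩ := Finset.mem_image.1 ha
    exact hP.memB p hp
  obtain ⟨R, hR, hRc, -⟩ := exists_PMatch X Y (A \ P.image Prod.fst) (B \ P.image Prod.snd)
  rw [Finset.card_sdiff_of_subset s1, Finset.card_sdiff_of_subset s2, c1, c2] at hRc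
  have l1 := Finset.card_le_card s1
  have l2 := Finset.card_le_card s2
  have n1 : ∀ p ∈ P, ∀ r ∈ R, p.1 ≠ r.1 := fun p hp r hr h =>
    (Finset.mem_sdiff.1 (hR.memA r hr)).2 (h ▸ Finset.mem_image_of_mem _ hp)
  have n2 : ∀ p ∈ P, ∀ r ∈ R, p.2 ≠ r.2 := fun p hp r hr h =>
    (Finset.mem_sdiff.1 (hR.memB r hr)).2 (h ▸ Finset.mem_image_of_mem _ hp)
  have hdis : Disjoint P R := Finset.disjoint_left.2 fun p hp hr => n1 p hp p hr rfl
  have rA : ∀ p ∈ R, p.1 ∈ A := fun p hp => (Finset.mem_sdiff.1 (hR.memA p hp)).1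
  have rB : ∀ p ∈ R, p.2 ∈ B := fun p hp => (Finset.mem_sdiff.1 (hR.memB p hp)).1
  have hU : PMatch A B (P ∪ R) := by
    refine ⟨?_, ?_, ?_, ?_⟩
    · intro p hp
      rcases Finset.mem_union.1 hp with h | h
      exacts [hP.memA p h, rA p h]
    · intro p hp
      rcases Finset.mem_union.1 hp with h | h
      exacts [hP.memB p h, rB p h]
    · intro p hp r hr e
      rcases Finset.mem_union.1 hp with h | h <;> rcases Finset.mem_union.1 hr with h' | h'
      · exact hP.inj1 p h r h' e
      · exact absurd e (n1 p h r h')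
      · exact absurd e.symm (n1 r h' p h)
      · exact hR.inj1 p h r h' e
    · intro p hp r hr e
      rcases Finset.mem_union.1 hp with h | h <;> rcases Finset.mem_union.1 hr with h' | h'
      · exact hP.inj2 p h r h' e
      · exact absurd e (n2 p h r h')
      · exact absurd e.symm (n2 r h' p h)
      · exact hR.inj2 p h r h' e
  have hcard : (P ∪ R).card = min A.card B.card := by
    rw [Finset.card_union_of_disjoint hdis]; omega
  have := LMBMon_le_of_PMatch X Y A B _ hU hcard
  rw [Finset.sum_union hdis] at this
  have hle : ∑ p ∈ R, dist (X p.1) (Y p.2) ≤ R.card • D :=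
    Finset.sum_le_card_nsmul _ _ _ fun p hp => hD _ (rA p hp) _ (rB p hp)
  have hRr : (R.card : ℝ) = (min A.card B.card : ℕ) - (P.card : ℝ) := by
    rw [eq_sub_iff_add_eq]
    rw [Finset.card_union_of_disjoint hdis] at hcard
    rw [← hcard]; push_cast; ring
  rw [nsmul_eq_mul, hRr] at hle
  linarith

theorem LMBMon_glue {d N₁ N₂ : ℕ} (X : Fin N₁ → EuclideanSpace ℝ (Fin d))
    (Y : Fin N₂ → EuclideanSpace ℝ (Fin d)) (A : Finset (Fin N₁)) (B : Finset (Fin N₂))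
    (D : ℝ) (hD0 : 0 ≤ D) (hD : ∀ a ∈ A, ∀ b ∈ B, dist (X a) (Y b) ≤ D)
    {Q : Type*} [Fintype Q] [DecidableEq Q] (f : Fin N₁ → Q) (g : Fin N₂ → Q) :
    LMBMon X Y A B ≤ ∑ q, LMBMon X Y (A.filter fun j => f j = q) (B.filter fun j => g j = q) +
      D / 2 * ∑ q, |((A.filter fun j => f j = q).card : ℝ) -
        ((B.filter fun j => g j = q).card : ℝ)| := by
  classical
  choose P hP hc hs using fun q =>
    exists_PMatch X Y (A.filter fun j => f j = q) (B.filter fun j => g j = q)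
  have hf : ∀ q, ∀ p ∈ P q, f p.1 = q := fun q p hp => (Finset.mem_filter.1 ((hP q).memA p hp)).2
  have hg : ∀ q, ∀ p ∈ P q, g p.2 = q := fun q p hp => (Finset.mem_filter.1 ((hP q).memB p hp)).2
  have hdis : Set.PairwiseDisjoint (↑(Finset.univ : Finset Q)) P := by
    intro q _ q' _ hne
    refine Finset.disjoint_left.2 fun p hp hp' => hne ?_
    rw [← hf q p hp, ← hf q' p hp']
  have hU : PMatch A B (Finset.univ.biUnion P) := by
    refine ⟨?_, ?_, ?_, ?_⟩
    · intro p hp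
      obtain ⟨q, -, hq⟩ := Finset.mem_biUnion.1 hp
      exact (Finset.mem_filter.1 ((hP q).memA p hq)).1
    · intro p hp
      obtain ⟨q, -, hq⟩ := Finset.mem_biUnion.1 hp
      exact (Finset.mem_filter.1 ((hP q).memB p hq)).1
    · intro p hp r hr e
      obtain ⟨q, -, hq⟩ := Finset.mem_biUnion.1 hp
      obtain ⟨q', -, hq'⟩ := Finset.mem_biUnion.1 hr
      have : q = q' := by rw [← hf q p hq, ← hf q' r hq', e]
      subst this
      exact (hP q).inj1 p hq r hq' e
    · intro p hp r hr e
      obtain ⟨q, -, hq⟩ := Finset.mem_biUnion.1 hp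
      obtain ⟨q', -, hq'⟩ := Finset.mem_biUnion.1 hr
      have : q = q' := by rw [← hg q p hq, ← hg q' r hq', e]
      subst this
      exact (hP q).inj2 p hq r hq' e
  have key := LMBMon_le_extend X Y A B D hD _ hU
  rw [Finset.sum_biUnion hdis, Finset.card_biUnion hdis] at key
  simp only [hs] at key
  have hA : (A.card : ℝ) = ∑ q, ((A.filter fun j => f j = q).card : ℝ) := by
    rw [Finset.card_eq_sum_card_fiberwise (f := f) (t := Finset.univ) (by simp [Set.MapsTo])]
    push_cast; rfl
  have hB : (B.card : ℝ) = ∑ q, ((B.filter fun j => g j = q).card : ℝ) := by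
    rw [Finset.card_eq_sum_card_fiberwise (f := g) (t := Finset.univ) (by simp [Set.MapsTo])]
    push_cast; rfl
  have hmin : ((min A.card B.card : ℕ) : ℝ) ≤ (A.card + B.card) / 2 := by
    have h1 : ((min A.card B.card : ℕ) : ℝ) ≤ A.card := by exact_mod_cast min_le_left _ _
    have h2 : ((min A.card B.card : ℕ) : ℝ) ≤ B.card := by exact_mod_cast min_le_right _ _
    linarith
  have hsum : ((∑ q, (P q).card : ℕ) : ℝ) = (A.card + B.card) / 2 -
      (∑ q, |((A.filter fun j => f j = q).card : ℝ) -
        ((B.filter fun j => g j = q).card : ℝ)|) / 2 := by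
    rw [hA, hB, ← Finset.sum_add_distrib, ← sub_div, ← Finset.sum_sub_distrib, Finset.sum_div]
    push_cast
    refine Finset.sum_congr rfl fun q _ => ?_
    rw [hc q]
    push_cast
    rcases le_total ((A.filter fun j => f j = q).card : ℝ)
      ((B.filter fun j => g j = q).card : ℝ) with h | h
    · rw [min_eq_left h, abs_of_nonpos (by linarith)]; ring
    · rw [min_eq_right h, abs_of_nonneg (by linarith)]; ring
  have : ((min A.card B.card : ℕ) - ((∑ q, (P q).card : ℕ) : ℝ)) * D ≤
    D / 2 * ∑ q, |((A.filter fun j => f j = q).card : ℝ) -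
        ((B.filter fun j => g j = q).card : ℝ)| := by
    calc _ ≤ ((∑ q, |((A.filter fun j => f j = q).card : ℝ) -
        ((B.filter fun j => g j = q).card : ℝ)|) / 2) * D := by
          apply mul_le_mul_of_nonneg_right _ hD0
          linarith
      _ = _ := by ring
  linarith

theorem dyadicLabel_lt (d k : ℕ) (x : EuclideanSpace ℝ (Fin d)) (i : Fin d) :
    dyadicLabel d k x i < 2 ^ k := by
  have : 0 < 2 ^ k := by positivity
  unfold dyadicLabel
  omega

theorem dyadicLabel_parent (d k : ℕ) (x : EuclideanSpace ℝ (Fin d)) (i : Fin d) :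
    dyadicLabel d k x i = dyadicLabel d (k + 1) x i / 2 := by
  have h : ⌊(2 : ℝ) ^ k * x i⌋₊ = ⌊(2 : ℝ) ^ (k + 1) * x i⌋₊ / 2 := by
    rw [← Nat.floor_div_ofNat]
    congr 1
    rw [pow_succ]
    simp
    ring
  have : 0 < 2 ^ k := by positivity
  unfold dyadicLabel
  rw [h, pow_succ 2 k]
  omega

theorem dyadicLabel_coord (d k : ℕ) (x : EuclideanSpace ℝ (Fin d)) (hx : x ∈ unitCube d)
    (i : Fin d) : (dyadicLabel d k x i : ℝ) ≤ 2 ^ k * x i ∧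
      2 ^ k * x i ≤ (dyadicLabel d k x i : ℝ) + 1 := by
  obtain ⟨h0, h1⟩ := hx i
  have hp : (0 : ℝ) < 2 ^ k := by positivity
  have hpn : 1 ≤ 2 ^ k := Nat.one_le_two_pow
  constructor
  · refine le_trans ?_ (Nat.floor_le (by positivity))
    exact Nat.cast_le.2 (min_le_left _ _)
  · unfold dyadicLabel
    rcases min_choice ⌊(2 : ℝ) ^ k * x i⌋₊ (2 ^ k - 1) with h | h <;> rw [h]
    · exact (Nat.lt_floor_add_one _).le
    · push_cast [hpn]
      nlinarith

theorem dist_le_of_label (d k : ℕ) (x y : EuclideanSpace ℝ (Fin d)) (hx : x ∈ unitCube d)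
    (hy : y ∈ unitCube d) (h : ∀ i, dyadicLabel d k x i = dyadicLabel d k y i) :
    dist x y ≤ Real.sqrt d / 2 ^ k := by
  have hp : (0 : ℝ) < 2 ^ k := by positivity
  rw [EuclideanSpace.dist_eq]
  have : ∀ i, dist (x i) (y i) ^ 2 ≤ (1 / 2 ^ k) ^ 2 := by
    intro i
    apply pow_le_pow_left₀ dist_nonneg
    obtain ⟨a, b⟩ := dyadicLabel_coord d k x hx i
    obtain ⟨a', b'⟩ := dyadicLabel_coord d k y hy i
    rw [h i] at a b
    rw [Real.dist_eq, le_div_iff₀ hp, ← abs_of_pos hp, ← abs_mul, abs_le]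
    constructor <;> simp only [abs_of_pos hp] <;> linarith
  calc _ ≤ Real.sqrt (∑ _i : Fin d, ((1 : ℝ) / 2 ^ k) ^ 2) :=
        Real.sqrt_le_sqrt (Finset.sum_le_sum fun i _ => this i)
    _ = _ := by
        rw [Finset.sum_const, Finset.card_univ, Fintype.card_fin, nsmul_eq_mul,
          Real.sqrt_mul (by positivity), Real.sqrt_sq (by positivity)]
        ring

/-- full label -/
noncomputable def lab (d k : ℕ) (x : EuclideanSpace ℝ (Fin d)) : Fin d → Fin (2 ^ k) :=
  fun i => ⟨dyadicLabel d k x i, dyadicLabel_lt d k x i⟩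

theorem lab_iff (d k : ℕ) (x : EuclideanSpace ℝ (Fin d)) (q : Fin d → Fin (2 ^ k)) :
    (∀ i, dyadicLabel d k x i = (q i : ℕ)) ↔ lab d k x = q := by
  simp [funext_iff, lab, Fin.ext_iff]

def par (d k : ℕ) (q : Fin d → Fin (2 ^ (k + 1))) : Fin d → Fin (2 ^ k) :=
  fun i => ⟨(q i : ℕ) / 2, by
    have := (q i).2
    have e := pow_succ 2 k
    omega⟩

theorem lab_par (d k : ℕ) (x : EuclideanSpace ℝ (Fin d)) :
    lab d k x = par d k (lab d (k + 1) x) := by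
  funext i
  simp [lab, par, dyadicLabel_parent d k x i]

theorem filter_par {d N : ℕ} (X : Fin N → EuclideanSpace ℝ (Fin d)) (k : ℕ)
    (q : Fin d → Fin (2 ^ (k + 1))) (r : Fin d → Fin (2 ^ k)) :
    ((Finset.univ.filter fun j => lab d k (X j) = r).filter fun j => lab d (k + 1) (X j) = q) =
      if r = par d k q then Finset.univ.filter fun j => lab d (k + 1) (X j) = q else ∅ := by
  split_ifs with h
  · ext j
    simp only [Finset.mem_filter, Finset.mem_univ, true_and, and_iff_right_iff_imp]
    intro e
    rw [lab_par, e, h]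
  · ext j
    simp only [Finset.mem_filter, Finset.mem_univ, true_and, Finset.notMem_empty, iff_false,
      not_and]
    intro e e'
    rw [lab_par, e'] at e
    exact h e.symm

theorem sum_par {d N₁ N₂ : ℕ} (X : Fin N₁ → EuclideanSpace ℝ (Fin d))
    (Y : Fin N₂ → EuclideanSpace ℝ (Fin d)) (k : ℕ)
    (F : Finset (Fin N₁) → Finset (Fin N₂) → ℝ) (hF : F ∅ ∅ = 0) :
    ∑ r : Fin d → Fin (2 ^ k), ∑ q : Fin d → Fin (2 ^ (k + 1)),
      F ((Finset.univ.filter fun j => lab d k (X j) = r).filter fun j => lab d (k + 1) (X j) = q)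
        ((Finset.univ.filter fun j => lab d k (Y j) = r).filter fun j => lab d (k + 1) (Y j) = q)
    = ∑ q : Fin d → Fin (2 ^ (k + 1)),
      F (Finset.univ.filter fun j => lab d (k + 1) (X j) = q)
        (Finset.univ.filter fun j => lab d (k + 1) (Y j) = q) := by
  rw [Finset.sum_comm]
  refine Finset.sum_congr rfl fun q _ => ?_
  rw [Finset.sum_eq_single (par d k q)]
  · rw [filter_par, filter_par]; simp
  · intro r _ hr
    rw [filter_par, filter_par]; simp [hr, hF]
  · simp

theorem dyadic_step {d N₁ N₂ : ℕ} (X : Fin N₁ → EuclideanSpace ℝ (Fin d))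
    (Y : Fin N₂ → EuclideanSpace ℝ (Fin d)) (hX : ∀ j, X j ∈ unitCube d)
    (hY : ∀ j, Y j ∈ unitCube d) (k : ℕ) :
    ∑ q : Fin d → Fin (2 ^ k), LMBMon X Y (Finset.univ.filter fun j => lab d k (X j) = q)
        (Finset.univ.filter fun j => lab d k (Y j) = q) ≤
    ∑ q : Fin d → Fin (2 ^ (k + 1)),
      LMBMon X Y (Finset.univ.filter fun j => lab d (k + 1) (X j) = q)
        (Finset.univ.filter fun j => lab d (k + 1) (Y j) = q) +
    Real.sqrt d / 2 ^ (k + 1) * ∑ q : Fin d → Fin (2 ^ (k + 1)),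
      |((Finset.univ.filter fun j => lab d (k + 1) (X j) = q).card : ℝ) -
        ((Finset.univ.filter fun j => lab d (k + 1) (Y j) = q).card : ℝ)| := by
  rw [← sum_par X Y k (LMBMon X Y) (LMBMon_empty X Y),
    ← sum_par X Y k (fun A B => |(A.card : ℝ) - (B.card : ℝ)|) (by simp), Finset.mul_sum,
    ← Finset.sum_add_distrib]
  refine Finset.sum_le_sum fun r _ => ?_
  have := LMBMon_glue X Y (Finset.univ.filter fun j => lab d k (X j) = r)
    (Finset.univ.filter fun j => lab d k (Y j) = r) (Real.sqrt d / 2 ^ k) (by positivity)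
    (by
      intro a ha b hb
      simp only [Finset.mem_filter, Finset.mem_univ, true_and] at ha hb
      rw [← lab_iff] at ha hb
      exact dist_le_of_label d k _ _ (hX a) (hY b) fun i => (ha i).trans (hb i).symm)
    (fun j => lab d (k + 1) (X j)) (fun j => lab d (k + 1) (Y j))
  have e : Real.sqrt d / 2 ^ (k + 1) = Real.sqrt d / 2 ^ k / 2 := by
    rw [pow_succ, ← div_div]
  rw [e]
  exact this

theorem dyadic_zero {d N₁ N₂ : ℕ} (X : Fin N₁ → EuclideanSpace ℝ (Fin d))
    (Y : Fin N₂ → EuclideanSpace ℝ (Fin d)) :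
    LMBM X Y = ∑ q : Fin d → Fin (2 ^ 0),
      LMBMon X Y (Finset.univ.filter fun j => lab d 0 (X j) = q)
        (Finset.univ.filter fun j => lab d 0 (Y j) = q) := by
  have hs : Subsingleton (Fin d → Fin (2 ^ 0)) := by rw [pow_zero]; infer_instance
  have q0 : Fin d → Fin (2 ^ 0) := fun _ => ⟨0, by simp⟩
  rw [Fintype.sum_subsingleton _ q0, LMBM]
  congr 1 <;>
  · symm
    rw [Finset.filter_true_of_mem]
    exact fun j _ => Subsingleton.elim _ _

/-- Repeated dyadic subadditivity of the minimum bipartite matching length: `K` successive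
dyadic subdivisions of `[0,1]^d` into `2^{kd}` congruent subcubes of edge `2⁻ᵏ`, `1 ≤ k ≤ K`. -/
theorem MBM_subadditive_dyadic
    (d N₁ N₂ K : ℕ) (hd : 1 ≤ d) (hK : 1 ≤ K)
    (X : Fin N₁ → EuclideanSpace ℝ (Fin d)) (Y : Fin N₂ → EuclideanSpace ℝ (Fin d))
    (hX : ∀ j, X j ∈ unitCube d) (hY : ∀ j, Y j ∈ unitCube d) :
    LMBM X Y ≤
      (∑ q : Fin d → Fin (2 ^ K),
        LMBMon X Y
          (Finset.univ.filter fun j => ∀ i, dyadicLabel d K (X j) i = (q i : ℕ))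
          (Finset.univ.filter fun j => ∀ i, dyadicLabel d K (Y j) i = (q i : ℕ))) +
      ∑ k ∈ Finset.Icc 1 K,
        Real.sqrt d / 2 ^ k *
          ∑ q : Fin d → Fin (2 ^ k),
            |((Finset.univ.filter fun j => ∀ i, dyadicLabel d k (X j) i = (q i : ℕ)).card : ℝ) -
             ((Finset.univ.filter fun j => ∀ i, dyadicLabel d k (Y j) i = (q i : ℕ)).card : ℝ)| := by
  simp only [lab_iff]
  clear hK
  induction K with
  | zero => simpa using (dyadic_zero X Y).le
  | succ k ih =>
    rw [Finset.sum_Icc_succ_top (by omega)]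
    have := dyadic_step X Y hX hY k
    linarith
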